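/- For every c > 0 there exists c' > 0, depending only on c, such that the following holds for all integers n ≥ 1, d ≥ 1 and every product model 𝒫 = { ∏_{j=1}^d p_{θ_j} : θ_j ∈ Θ_j }: if for each j ∈ [d] there exist θ_{j,+}, θ_{j,−} ∈ Θ_j with 1/(10n) ≤ H²(p_{θ_{j,+}}, p_{θ_{j,−}}) ≤ 1/(5n), then the minimax sample-amplification error satisfies ε*(𝒫, n, ⌈cn/√d⌉) ≥ c'. -/

import Mathlib

open MeasureTheory ProbabilityTheory
open scoped ENNReal NNReal

/-- Total variation distance between two measures: `sup_A |P(A) - Q(A)|`. -/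
noncomputable def tvDist {X : Type*} [MeasurableSpace X] (μ ν : Measure X) : ℝ :=
  ⨆ A : {s : Set X // MeasurableSet s}, |(μ A).toReal - (ν A).toReal|

/-- Minimax sample amplification error `ε*(𝒫, n, m)` for the family `(P θ)_θ`. -/
noncomputable def ampErr {X Θ : Type*} [MeasurableSpace X] (P : Θ → Measure X)
    (n m : ℕ) : ℝ :=
  ⨅ T : {T : Kernel (Fin n → X) (Fin (n + m) → X) // IsMarkovKernel T},
    ⨆ θ : Θ, tvDist (Measure.pi fun _ : Fin (n + m) => P θ)
      ((Measure.pi fun _ : Fin n => P θ).bind T.1)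

/-- The squared Hellinger distance
`H²(P,Q) = (1/2)∫ (√(dP/dν) − √(dQ/dν))² dν`, computed with the dominating measure
`ν = P + Q`. -/
noncomputable def hellingerSq {X : Type*} [MeasurableSpace X] (P Q : Measure X) : ℝ :=
  (1 / 2) * ∫ x, (Real.sqrt ((P.rnDeriv (P + Q) x).toReal) -
      Real.sqrt ((Q.rnDeriv (P + Q) x).toReal)) ^ 2 ∂(P + Q)

/-!
Choose the parameters `θ_{j,±}` by independent fair bits and predict each bit from the data under
the quadratic (Brier) loss. By the Hellinger separation, `n` samples leave every bit uncertain,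
while `m = ⌈c n / √d⌉` further samples lower its Bayes risk by at least a constant times `1 / √d`.
Score a prediction of all bits by the product over the coordinates of `1 - loss / √d`. Its mean
under `n + m` genuine samples, read by the coordinatewise posteriors, exceeds by a constant factor
its largest possible mean under samples produced from `n` by any kernel, while its second moment is
comparable to the squared mean, because each of the `d` factors fluctuates by only `O(1 / √d)`. By
Cauchy–Schwarz on the positive part of the difference of the genuine and the produced laws, this
relative gap in means forces a constant total variation distance for some choice of the bits.
-/

section TotalVariation

variable {X Y : Type*} [MeasurableSpace X] [MeasurableSpace Y] (μ ν : Measure X)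

lemma abs_measureReal_sub_le_tvDist [IsFiniteMeasure μ] [IsFiniteMeasure ν] {s : Set X}
    (hs : MeasurableSet s) : |μ.real s - ν.real s| ≤ tvDist μ ν := by
  refine le_ciSup (f := fun A : {s : Set X // MeasurableSet s} => |μ.real A - ν.real A|)
    ⟨μ.real Set.univ + ν.real Set.univ, ?_⟩ ⟨s, hs⟩
  rintro _ ⟨A, rfl⟩
  have hμ : μ.real A ≤ μ.real Set.univ := measureReal_mono (Set.subset_univ _)
  have hν : ν.real A ≤ ν.real Set.univ := measureReal_mono (Set.subset_univ _)
  simp only [abs_le]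
  constructor <;> linarith [measureReal_nonneg (μ := μ) (s := A),
    measureReal_nonneg (μ := ν) (s := A)]

lemma tvDist_nonneg [IsFiniteMeasure μ] [IsFiniteMeasure ν] : 0 ≤ tvDist μ ν :=
  (abs_nonneg _).trans (abs_measureReal_sub_le_tvDist μ ν .empty)

lemma tvDist_le_one [IsProbabilityMeasure μ] [IsProbabilityMeasure ν] : tvDist μ ν ≤ 1 := by
  have : Nonempty {s : Set X // MeasurableSet s} := ⟨⟨∅, .empty⟩⟩
  exact ciSup_le fun A => abs_sub_le_of_nonneg_of_le measureReal_nonneg measureReal_le_one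
    measureReal_nonneg measureReal_le_one

lemma tvDist_map_le [IsFiniteMeasure μ] [IsFiniteMeasure ν] {f : X → Y} (hf : Measurable f) :
    tvDist (μ.map f) (ν.map f) ≤ tvDist μ ν := by
  have : Nonempty {s : Set Y // MeasurableSet s} := ⟨⟨∅, .empty⟩⟩
  refine ciSup_le fun ⟨A, hA⟩ => ?_
  rw [Measure.map_apply hf hA, Measure.map_apply hf hA]
  exact abs_measureReal_sub_le_tvDist μ ν (hf hA)

lemma exists_le_and_le_add_and_measureReal_univ_le_tvDist [IsFiniteMeasure μ]
    [IsFiniteMeasure ν] :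
    ∃ ρ : Measure X, ρ ≤ μ ∧ μ ≤ ρ + ν ∧ ρ.real Set.univ ≤ tvDist μ ν := by
  obtain ⟨s, hs⟩ := exists_isHahnDecomposition ν μ
  have le_s : ν s ≤ μ s := by simpa only [Measure.restrict_apply_self] using hs.le_on s
  refine ⟨μ.restrict s - ν.restrict s, Measure.sub_le.trans Measure.restrict_le_self, ?_, ?_⟩
  · calc μ = μ.restrict s + μ.restrict sᶜ :=
          (Measure.restrict_add_restrict_compl hs.measurableSet).symm
      _ ≤ μ.restrict s + ν.restrict sᶜ := add_le_add le_rfl hs.ge_on_compl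
      _ = μ.restrict s - ν.restrict s + (ν.restrict s + ν.restrict sᶜ) := by
          rw [← add_assoc, Measure.sub_add_cancel_of_le hs.le_on]
      _ = μ.restrict s - ν.restrict s + ν := by
          rw [Measure.restrict_add_restrict_compl hs.measurableSet]
  · calc (μ.restrict s - ν.restrict s).real Set.univ = μ.real s - ν.real s := by
          rw [measureReal_def, Measure.sub_apply .univ hs.le_on, Measure.restrict_apply_univ,
            Measure.restrict_apply_univ, ENNReal.toReal_sub_of_le le_s (measure_ne_top _ _),
            ← measureReal_def, ← measureReal_def]
      _ ≤ tvDist μ ν :=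
          (le_abs_self _).trans (abs_measureReal_sub_le_tvDist μ ν hs.measurableSet)

lemma integral_le_sqrt_measureReal_univ_mul [IsFiniteMeasure μ] {f : X → ℝ} (hf : MemLp f 2 μ)
    (hf0 : 0 ≤ f) : ∫ x, f x ∂μ ≤ √(μ.real Set.univ * ∫ x, f x ^ 2 ∂μ) := by
  have holder := integral_mul_le_Lp_mul_Lq_of_nonneg (μ := μ) (f := fun _ => (1 : ℝ)) (g := f)
    .two_two (.of_forall fun _ => zero_le_one) (.of_forall hf0)
    (memLp_const 1) (by simpa using hf)
  rw [Real.sqrt_mul measureReal_nonneg, Real.sqrt_eq_rpow, Real.sqrt_eq_rpow]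
  simpa using holder

/-- The positive part of `μ - ν` has mass at most the total variation distance; Cauchy–Schwarz on
that part replaces a supremum bound on `f` by a second moment. -/
lemma integral_sub_integral_le_sqrt_tvDist_mul [IsFiniteMeasure μ] [IsFiniteMeasure ν] {f : X → ℝ}
    (hf : MemLp f 2 μ) (hfν : Integrable f ν) (hf0 : 0 ≤ f) :
    ∫ x, f x ∂μ - ∫ x, f x ∂ν ≤ √(tvDist μ ν * ∫ x, f x ^ 2 ∂μ) := by
  obtain ⟨ρ, le_μ, le_add, mass_le⟩ := exists_le_and_le_add_and_measureReal_univ_le_tvDist μ ν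
  have : IsFiniteMeasure ρ := isFiniteMeasure_of_le μ le_μ
  have hfρ : MemLp f 2 ρ := hf.mono_measure le_μ
  have hfρ_int : Integrable f ρ := hfρ.integrable one_le_two
  calc ∫ x, f x ∂μ - ∫ x, f x ∂ν ≤ ∫ x, f x ∂ρ := by
        rw [sub_le_iff_le_add, ← integral_add_measure hfρ_int hfν]
        exact integral_mono_measure le_add (.of_forall hf0) (hfρ_int.add_measure hfν)
    _ ≤ √(ρ.real Set.univ * ∫ x, f x ^ 2 ∂ρ) := integral_le_sqrt_measureReal_univ_mul _ hfρ hf0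
    _ ≤ √(tvDist μ ν * ∫ x, f x ^ 2 ∂μ) := by
        gcongr
        · exact measureReal_nonneg.trans mass_le
        · exact .of_forall fun x => sq_nonneg (f x)
        · exact hf.integrable_sq

lemma sum_sqrt_le {ι : Type*} [Fintype ι] {f : ι → ℝ} (hf : ∀ i, 0 ≤ f i) :
    ∑ i, √(f i) ≤ √(Fintype.card ι * ∑ i, f i) := by
  refine Real.le_sqrt_of_sq_le (sq_sum_le_card_mul_sum_sq.trans_eq ?_)
  simp only [Real.sq_sqrt (hf _), Finset.card_univ]

lemma sum_integral_sub_integral_le_sqrt {Θ : Type*} [Fintype Θ] {μ ν : Θ → Measure X}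
    [∀ θ, IsFiniteMeasure (μ θ)] [∀ θ, IsFiniteMeasure (ν θ)] {f : Θ → X → ℝ}
    (hf : ∀ θ, MemLp (f θ) 2 (μ θ)) (hfν : ∀ θ, Integrable (f θ) (ν θ)) (hf0 : ∀ θ, 0 ≤ f θ)
    {t : ℝ} (ht : ∀ θ, tvDist (μ θ) (ν θ) ≤ t) :
    ∑ θ, (∫ x, f θ x ∂(μ θ) - ∫ x, f θ x ∂(ν θ)) ≤
      √(Fintype.card Θ * (t * ∑ θ, ∫ x, f θ x ^ 2 ∂(μ θ))) := by
  have second_moment_nonneg (θ : Θ) : 0 ≤ ∫ x, f θ x ^ 2 ∂(μ θ) :=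
    integral_nonneg fun x => sq_nonneg (f θ x)
  calc ∑ θ, (∫ x, f θ x ∂(μ θ) - ∫ x, f θ x ∂(ν θ))
      ≤ ∑ θ, √(tvDist (μ θ) (ν θ) * ∫ x, f θ x ^ 2 ∂(μ θ)) :=
        Finset.sum_le_sum fun θ _ =>
          integral_sub_integral_le_sqrt_tvDist_mul (μ θ) (ν θ) (hf θ) (hfν θ) (hf0 θ)
    _ ≤ √(Fintype.card Θ * ∑ θ, tvDist (μ θ) (ν θ) * ∫ x, f θ x ^ 2 ∂(μ θ)) :=
        sum_sqrt_le fun θ => mul_nonneg (tvDist_nonneg _ _) (second_moment_nonneg θ)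
    _ ≤ √(Fintype.card Θ * (t * ∑ θ, ∫ x, f θ x ^ 2 ∂(μ θ))) := by
        rw [Finset.mul_sum _ _ t]
        gcongr with θ
        exact ht θ

end TotalVariation

/-- The probability given to the bit `s` by the forecast `a`, which gives `true` probability `a`. -/
def forecastProb (s : Bool) (a : ℝ) : ℝ := if s then a else 1 - a

lemma forecastProb_mem_Icc (s : Bool) {a : ℝ} (ha : a ∈ Set.Icc (0 : ℝ) 1) :
    forecastProb s a ∈ Set.Icc (0 : ℝ) 1 := by
  cases s
  · exact Set.Icc.mem_iff_one_sub_mem.1 ha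
  · exact ha

lemma measurable_forecastProb (s : Bool) : Measurable (forecastProb s) := by
  cases s
  · exact measurable_const.sub measurable_id
  · exact measurable_id

section Posterior

variable {X : Type*} [MeasurableSpace X] (P : Bool → Measure X)

/-- The posterior probability of `true` in the binary experiment `P` under the uniform prior: the
density of `P true` with respect to `P true + P false`. It is at most `1` almost everywhere; the
truncation makes this hold everywhere. -/
noncomputable def posteriorProb (x : X) : ℝ :=
  min ((P true).rnDeriv (P true + P false) x).toReal 1

lemma measurable_posteriorProb : Measurable (posteriorProb P) :=
  (Measure.measurable_rnDeriv _ _).ennreal_toReal.min measurable_const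

lemma posteriorProb_mem_Icc (x : X) : posteriorProb P x ∈ Set.Icc (0 : ℝ) 1 :=
  ⟨le_min ENNReal.toReal_nonneg zero_le_one, min_le_right _ _⟩

lemma measurable_forecastProb_posteriorProb (s : Bool) :
    Measurable fun x => forecastProb s (posteriorProb P x) :=
  (measurable_forecastProb s).comp (measurable_posteriorProb P)

lemma forecastProb_posteriorProb_mem_Icc (s : Bool) (x : X) :
    forecastProb s (posteriorProb P x) ∈ Set.Icc (0 : ℝ) 1 :=
  forecastProb_mem_Icc s (posteriorProb_mem_Icc P x)

variable [∀ s, IsFiniteMeasure (P s)]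

lemma toReal_rnDeriv_ae_eq_forecastProb (s : Bool) :
    (fun x => ((P s).rnDeriv (P true + P false) x).toReal) =ᵐ[P true + P false]
      fun x => forecastProb s (posteriorProb P x) := by
  have sum_eq_one : ∀ᵐ x ∂(P true + P false), (P true).rnDeriv (P true + P false) x +
      (P false).rnDeriv (P true + P false) x = 1 := by
    filter_upwards [Measure.rnDeriv_add (P true) (P false) (P true + P false),
      Measure.rnDeriv_self (P true + P false)] with x add self
    rw [← Pi.add_apply, ← add, self]
  filter_upwards [sum_eq_one] with x hx
  have true_le : (P true).rnDeriv (P true + P false) x ≤ 1 := hx ▸ le_self_add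
  have post : posteriorProb P x = ((P true).rnDeriv (P true + P false) x).toReal :=
    min_eq_left (ENNReal.toReal_mono ENNReal.one_ne_top true_le)
  rw [post]
  cases s
  · have false_eq := ENNReal.eq_sub_of_add_eq' ENNReal.one_ne_top ((add_comm _ _).trans hx)
    simp [forecastProb, false_eq, ENNReal.toReal_sub_of_le true_le]
  · simp [forecastProb]

lemma withDensity_forecastProb_posteriorProb (s : Bool) :
    (P true + P false).withDensity
      (fun x => ENNReal.ofReal (forecastProb s (posteriorProb P x))) = P s := by
  have ac : P s ≪ P true + P false := by
    cases s
    · exact (Measure.le_add_left le_rfl).absolutelyContinuous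
    · exact (Measure.le_add_right le_rfl).absolutelyContinuous
  rw [← Measure.withDensity_rnDeriv_eq _ _ ac]
  refine withDensity_congr_ae ?_
  filter_upwards [toReal_rnDeriv_ae_eq_forecastProb P s,
    (P s).rnDeriv_ne_top (P true + P false)] with x hx ne_top
  rw [← hx, ENNReal.ofReal_toReal ne_top]

lemma integral_eq_integral_forecastProb_mul (s : Bool) (f : X → ℝ) :
    ∫ x, f x ∂(P s) = ∫ x, forecastProb s (posteriorProb P x) * f x ∂(P true + P false) := by
  conv_lhs => rw [← withDensity_forecastProb_posteriorProb P s]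
  have hm : Measurable fun x => ENNReal.ofReal (forecastProb s (posteriorProb P x)) :=
    (measurable_forecastProb_posteriorProb P s).ennreal_ofReal
  rw [integral_withDensity_eq_integral_toReal_smul hm (.of_forall fun _ => ENNReal.ofReal_lt_top)]
  refine integral_congr_ae (.of_forall fun x => ?_)
  simp only [ENNReal.toReal_ofReal (forecastProb_posteriorProb_mem_Icc P s x).1,
    smul_eq_mul]

lemma sum_integral_eq_integral_sum_forecastProb_mul {f : Bool → X → ℝ}
    (hf : ∀ s, Integrable (f s) (P true + P false)) :
    ∑ s, ∫ x, f s x ∂(P s) =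
      ∫ x, ∑ s, forecastProb s (posteriorProb P x) * f s x ∂(P true + P false) := by
  rw [integral_finsetSum]
  · simp only [← integral_eq_integral_forecastProb_mul]
  · intro s _
    refine (hf s).bdd_mul (c := 1)
      (measurable_forecastProb_posteriorProb P s).aestronglyMeasurable (.of_forall fun x => ?_)
    rw [Real.norm_of_nonneg (forecastProb_posteriorProb_mem_Icc P s x).1]
    exact (forecastProb_posteriorProb_mem_Icc P s x).2

end Posterior

section ProductMeasures

lemma pi_withDensity_ofReal {ι : Type*} [Fintype ι] {X : ι → Type*}
    [∀ i, MeasurableSpace (X i)] (μ : ∀ i, Measure (X i)) [∀ i, IsFiniteMeasure (μ i)]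
    {f : ∀ i, X i → ℝ} (hf : ∀ i, Integrable (f i) (μ i)) (hf0 : ∀ i, 0 ≤ f i) :
    (Measure.pi fun i => (μ i).withDensity fun x => ENNReal.ofReal (f i x)) =
      (Measure.pi μ).withDensity fun x => ENNReal.ofReal (∏ i, f i (x i)) := by
  have (i : ι) : IsFiniteMeasure ((μ i).withDensity fun x => ENNReal.ofReal (f i x)) :=
    isFiniteMeasure_withDensity_ofReal (hf i).hasFiniteIntegral
  have lintegral_eq (i : ι) (s : Set (X i)) : ∫⁻ x in s, ENNReal.ofReal (f i x) ∂(μ i) =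
      ENNReal.ofReal (∫ x in s, f i x ∂(μ i)) :=
    (ofReal_integral_eq_lintegral_ofReal (hf i).integrableOn (.of_forall (hf0 i))).symm
  refine Measure.pi_eq fun s hs => ?_
  rw [withDensity_apply _ (MeasurableSet.univ_pi hs), Measure.restrict_pi_pi,
    ← ofReal_integral_eq_lintegral_ofReal
      (Integrable.fintype_prod_dep fun i => (hf i).integrableOn)
      (.of_forall fun x => Finset.prod_nonneg fun i _ => hf0 i (x i)),
    integral_fintype_prod_eq_prod,
    ENNReal.ofReal_prod_of_nonneg fun i _ => integral_nonneg (hf0 i)]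
  simp only [withDensity_apply _ (hs _), lintegral_eq]

lemma pi_eq_withDensity_prod_forecastProb {ι : Type*} [Fintype ι] {X : ι → Type*}
    [∀ i, MeasurableSpace (X i)] (P : ∀ i, Bool → Measure (X i)) [∀ i s, IsFiniteMeasure (P i s)]
    (θ : ι → Bool) : (Measure.pi fun i => P i (θ i)) =
      (Measure.pi fun i => P i true + P i false).withDensity
        fun x => ENNReal.ofReal (∏ i, forecastProb (θ i) (posteriorProb (P i) (x i))) := by
  rw [← pi_withDensity_ofReal _
    (fun i => .of_mem_Icc 0 1 (measurable_forecastProb_posteriorProb (P i) (θ i)).aemeasurable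
      (.of_forall (forecastProb_posteriorProb_mem_Icc (P i) (θ i))))
    (fun i x => (forecastProb_posteriorProb_mem_Icc (P i) (θ i) x).1)]
  simp only [withDensity_forecastProb_posteriorProb]

lemma measurable_pi_swap {ι κ : Type*} {X : κ → Type*} [∀ j, MeasurableSpace (X j)] :
    Measurable fun (x : ι → ∀ j, X j) (j : κ) (i : ι) => x i j := by
  fun_prop

lemma pi_map_swap {ι κ : Type*} [Fintype ι] [Fintype κ] {X : κ → Type*}
    [∀ j, MeasurableSpace (X j)] (μ : ∀ j, Measure (X j)) [∀ j, IsFiniteMeasure (μ j)] :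
    (Measure.pi fun _ : ι => Measure.pi μ).map (fun x j i => x i j) =
      Measure.pi fun j => Measure.pi fun _ : ι => μ j := by
  refine (Measure.pi_eq_generateFrom (C := fun j => Set.univ.pi '' Set.univ.pi
    fun _ : ι => {s : Set (X j) | MeasurableSet s}) (fun j => generateFrom_pi)
    (fun j => isPiSystem_pi) (fun j => ?_) fun s hs => ?_).symm
  · exact ⟨fun _ => Set.univ, fun _ => ⟨fun _ => Set.univ, fun _ _ => .univ, Set.pi_univ _⟩,
      fun _ => measure_lt_top _ _, Set.iUnion_const _⟩
  · choose t ht hts using hs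
    have measurable_pi (j : κ) : MeasurableSet (s j) :=
      hts j ▸ MeasurableSet.univ_pi fun i => ht j i trivial
    have preimage_eq : (fun (x : ι → ∀ j, X j) (j : κ) (i : ι) => x i j) ⁻¹' Set.univ.pi s =
        Set.univ.pi fun i => Set.univ.pi fun j => t j i := by
      ext x
      simp only [← hts, Set.mem_preimage, Set.mem_pi, Set.mem_univ, true_imp_iff]
      exact forall_comm
    rw [Measure.map_apply measurable_pi_swap (.univ_pi measurable_pi), preimage_eq, Measure.pi_pi]
    simp only [← hts, Measure.pi_pi]
    exact Finset.prod_comm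

end ProductMeasures

/-- The Hellinger affinity `∫ √(dP₊ dP₋)` of the two measures `P₊ = P true` and `P₋ = P false`,
computed with the dominating measure `P₊ + P₋`. -/
noncomputable def hellingerAffinity {X : Type*} [MeasurableSpace X] (P : Bool → Measure X) : ℝ :=
  ∫ x, √(posteriorProb P x * (1 - posteriorProb P x)) ∂(P true + P false)

section HellingerAffinity

variable {X : Type*} [MeasurableSpace X]

lemma measurable_sqrt_posteriorProb_mul (P : Bool → Measure X) :
    Measurable fun x => √(posteriorProb P x * (1 - posteriorProb P x)) :=
  ((measurable_posteriorProb P).mul (measurable_const.sub (measurable_posteriorProb P))).sqrt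

lemma sqrt_mul_one_sub_mem_Icc {a : ℝ} (ha : a ∈ Set.Icc (0 : ℝ) 1) :
    √(a * (1 - a)) ∈ Set.Icc (0 : ℝ) 1 :=
  ⟨Real.sqrt_nonneg _, Real.sqrt_le_one.2 (by nlinarith [ha.1, ha.2])⟩

lemma sq_sqrt_sub_sqrt_one_sub {a : ℝ} (ha : a ∈ Set.Icc (0 : ℝ) 1) :
    (√a - √(1 - a)) ^ 2 = 1 - 2 * √(a * (1 - a)) := by
  rw [Real.sqrt_mul ha.1, sub_sq, Real.sq_sqrt ha.1, Real.sq_sqrt (sub_nonneg.2 ha.2)]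
  ring

lemma abs_sqrt_sub_sqrt_one_sub_le_one {a : ℝ} (ha : a ∈ Set.Icc (0 : ℝ) 1) :
    |√a - √(1 - a)| ≤ 1 :=
  abs_sub_le_of_nonneg_of_le (Real.sqrt_nonneg _) (Real.sqrt_le_one.2 ha.2) (Real.sqrt_nonneg _)
    (Real.sqrt_le_one.2 (sub_le_self 1 ha.1))

lemma integrable_sq_sqrt_posteriorProb_sub (P : Bool → Measure X) [∀ s, IsFiniteMeasure (P s)] :
    Integrable (fun x => (√(posteriorProb P x) - √(1 - posteriorProb P x)) ^ 2)
      (P true + P false) :=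
  .of_mem_Icc 0 1 (((measurable_posteriorProb P).sqrt.sub
    (measurable_const.sub (measurable_posteriorProb P)).sqrt).pow_const 2).aemeasurable
    (.of_forall fun x => ⟨sq_nonneg _, (sq_le_one_iff_abs_le_one _).2
      (abs_sqrt_sub_sqrt_one_sub_le_one (posteriorProb_mem_Icc P x))⟩)

lemma integral_sq_sqrt_posteriorProb_sub (P : Bool → Measure X) [∀ s, IsProbabilityMeasure (P s)] :
    ∫ x, (√(posteriorProb P x) - √(1 - posteriorProb P x)) ^ 2 ∂(P true + P false) =
      2 * (1 - hellingerAffinity P) := by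
  have integrable_sqrt : Integrable (fun x => √(posteriorProb P x * (1 - posteriorProb P x)))
      (P true + P false) := .of_mem_Icc 0 1 (measurable_sqrt_posteriorProb_mul P).aemeasurable
    (.of_forall fun x => sqrt_mul_one_sub_mem_Icc (posteriorProb_mem_Icc P x))
  simp only [sq_sqrt_sub_sqrt_one_sub (posteriorProb_mem_Icc P _)]
  rw [integral_sub (integrable_const 1) (integrable_sqrt.const_mul 2), integral_const_mul]
  rw [integral_const, measureReal_add_apply, probReal_univ, probReal_univ, ← hellingerAffinity,
    smul_eq_mul]
  ring

lemma hellingerAffinity_le_one (P : Bool → Measure X) [∀ s, IsProbabilityMeasure (P s)] :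
    hellingerAffinity P ≤ 1 := by
  have nonneg : 0 ≤ 2 * (1 - hellingerAffinity P) :=
    integral_sq_sqrt_posteriorProb_sub P ▸ integral_nonneg fun _ => sq_nonneg _
  linarith

lemma hellingerSq_eq_one_sub_hellingerAffinity (P : Bool → Measure X)
    [∀ s, IsProbabilityMeasure (P s)] :
    hellingerSq (P true) (P false) = 1 - hellingerAffinity P := by
  have sq_ae_eq : ∀ᵐ x ∂(P true + P false),
      (√((P true).rnDeriv (P true + P false) x).toReal -
        √((P false).rnDeriv (P true + P false) x).toReal) ^ 2 =
      (√(posteriorProb P x) - √(1 - posteriorProb P x)) ^ 2 := by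
    filter_upwards [toReal_rnDeriv_ae_eq_forecastProb P true,
      toReal_rnDeriv_ae_eq_forecastProb P false] with x h₁ h₀
    rw [h₁, h₀]
    simp [forecastProb]
  rw [hellingerSq, integral_congr_ae sq_ae_eq, integral_sq_sqrt_posteriorProb_sub]
  ring

section DominatingMeasure

variable {P : Bool → Measure X} {ν : Measure X} {f : Bool → X → ℝ}

lemma add_eq_withDensity_ofReal_add (hf : ∀ s, Measurable (f s)) (hf0 : ∀ s, 0 ≤ f s)
    (hP : ∀ s, P s = ν.withDensity fun x => ENNReal.ofReal (f s x)) :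
    P true + P false = ν.withDensity fun x => ENNReal.ofReal (f true x + f false x) := by
  rw [hP true, hP false, ← withDensity_add_left (hf true).ennreal_ofReal]
  congr with x
  exact (ENNReal.ofReal_add (hf0 _ x) (hf0 _ x)).symm

lemma density_ae_eq_add_mul_forecastProb_posteriorProb [∀ s, IsFiniteMeasure (P s)]
    [SigmaFinite ν] (hf : ∀ s, Measurable (f s)) (hf0 : ∀ s, 0 ≤ f s)
    (hP : ∀ s, P s = ν.withDensity fun x => ENNReal.ofReal (f s x)) (s : Bool) :
    ∀ᵐ x ∂ν, f s x = (f true x + f false x) * forecastProb s (posteriorProb P x) := by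
  have sum_nonneg (x : X) : 0 ≤ f true x + f false x := add_nonneg (hf0 _ x) (hf0 _ x)
  have measurable_sum : Measurable fun x => ENNReal.ofReal (f true x + f false x) :=
    ((hf true).add (hf false)).ennreal_ofReal
  have measurable_post := (measurable_forecastProb_posteriorProb P s).ennreal_ofReal
  have density_eq : ν.withDensity (fun x => ENNReal.ofReal (f s x)) = ν.withDensity
      ((fun x => ENNReal.ofReal (f true x + f false x)) *
        fun x => ENNReal.ofReal (forecastProb s (posteriorProb P x))) := by
    rw [← hP s, withDensity_mul _ measurable_sum measurable_post,
      ← add_eq_withDensity_ofReal_add hf hf0 hP, withDensity_forecastProb_posteriorProb]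
  filter_upwards [(withDensity_eq_iff_of_sigmaFinite (hf s).ennreal_ofReal.aemeasurable
    (measurable_sum.mul measurable_post).aemeasurable).1 density_eq] with x hx
  rwa [Pi.mul_apply, ← ENNReal.ofReal_mul (sum_nonneg x), ENNReal.ofReal_eq_ofReal_iff (hf0 s x)
    (mul_nonneg (sum_nonneg x) (forecastProb_posteriorProb_mem_Icc P s x).1)] at hx

lemma hellingerAffinity_eq_integral_sqrt [∀ s, IsFiniteMeasure (P s)] [SigmaFinite ν]
    (hf : ∀ s, Measurable (f s)) (hf0 : ∀ s, 0 ≤ f s)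
    (hP : ∀ s, P s = ν.withDensity fun x => ENNReal.ofReal (f s x)) :
    hellingerAffinity P = ∫ x, √(f true x * f false x) ∂ν := by
  have sum_nonneg (x : X) : 0 ≤ f true x + f false x := add_nonneg (hf0 _ x) (hf0 _ x)
  have measurable_sum : Measurable fun x => ENNReal.ofReal (f true x + f false x) :=
    ((hf true).add (hf false)).ennreal_ofReal
  rw [hellingerAffinity, add_eq_withDensity_ofReal_add hf hf0 hP,
    integral_withDensity_eq_integral_toReal_smul measurable_sum
      (.of_forall fun _ => ENNReal.ofReal_lt_top)]
  refine integral_congr_ae ?_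
  filter_upwards [density_ae_eq_add_mul_forecastProb_posteriorProb hf hf0 hP true,
    density_ae_eq_add_mul_forecastProb_posteriorProb hf hf0 hP false] with x h₁ h₀
  calc (ENNReal.ofReal (f true x + f false x)).toReal •
        √(posteriorProb P x * (1 - posteriorProb P x))
      = √((f true x + f false x) ^ 2 * (posteriorProb P x * (1 - posteriorProb P x))) := by
        rw [ENNReal.toReal_ofReal (sum_nonneg x), smul_eq_mul, Real.sqrt_mul (sq_nonneg _),
          Real.sqrt_sq (sum_nonneg x)]
    _ = √(((f true x + f false x) * forecastProb true (posteriorProb P x)) *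
          ((f true x + f false x) * forecastProb false (posteriorProb P x))) := by
        congr 1
        simp only [forecastProb, if_true, Bool.false_eq_true, if_false]
        ring
    _ = √(f true x * f false x) := by rw [← h₁, ← h₀]

end DominatingMeasure

lemma hellingerAffinity_pi {ι : Type*} [Fintype ι] {X : ι → Type*} [∀ i, MeasurableSpace (X i)]
    (P : ∀ i, Bool → Measure (X i)) [∀ i s, IsFiniteMeasure (P i s)] :
    hellingerAffinity (fun s => Measure.pi fun i => P i s) = ∏ i, hellingerAffinity (P i) := by
  have post_nonneg (s : Bool) (i : ι) (x : X i) : 0 ≤ forecastProb s (posteriorProb (P i) x) :=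
    (forecastProb_posteriorProb_mem_Icc (P i) s x).1
  have pi_eq (s : Bool) : (Measure.pi fun i => P i s) =
      (Measure.pi fun i => P i true + P i false).withDensity
        fun x => ENNReal.ofReal (∏ i, forecastProb s (posteriorProb (P i) (x i))) :=
    pi_eq_withDensity_prod_forecastProb P fun _ => s
  rw [hellingerAffinity_eq_integral_sqrt (fun s => Finset.measurable_prod _ fun i _ =>
      (measurable_forecastProb_posteriorProb (P i) s).comp (measurable_pi_apply i))
    (fun s x => Finset.prod_nonneg fun i _ => post_nonneg s i (x i)) pi_eq]
  simp only [hellingerAffinity, ← integral_fintype_prod_eq_prod]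
  refine integral_congr_ae (.of_forall fun x => ?_)
  dsimp only
  rw [← Finset.prod_mul_distrib, Real.sqrt_prod]
  · simp [forecastProb]
  · intro i _
    exact mul_nonneg (post_nonneg _ i _) (post_nonneg _ i _)

lemma hellingerAffinity_pi_const {ι : Type*} [Fintype ι] (P : Bool → Measure X)
    [∀ s, IsFiniteMeasure (P s)] :
    hellingerAffinity (fun s => Measure.pi fun _ : ι => P s) =
      hellingerAffinity P ^ Fintype.card ι := by
  rw [hellingerAffinity_pi fun _ => P, Finset.prod_const, Finset.card_univ]

end HellingerAffinity

section BrierRisk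

/-- The Bayes risk, under the uniform prior and the quadratic (Brier) loss, of the forecast `a` in
the binary experiment `P`. -/
noncomputable def brierRisk {X : Type*} [MeasurableSpace X] (P : Bool → Measure X) (a : X → ℝ) :
    ℝ :=
  1 / 2 * ∑ s, ∫ x, (1 - forecastProb s (a x)) ^ 2 ∂(P s)

/-- The smallest Brier risk in the binary experiment `P`, attained by the posterior. -/
noncomputable def bayesBrierRisk {X : Type*} [MeasurableSpace X] (P : Bool → Measure X) : ℝ :=
  1 / 2 * ∫ x, posteriorProb P x * (1 - posteriorProb P x) ∂(P true + P false)

variable {X Y : Type*} [MeasurableSpace X] [MeasurableSpace Y]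

lemma sum_forecastProb_mul_sq (π a : ℝ) :
    ∑ s, forecastProb s π * (1 - forecastProb s a) ^ 2 = π * (1 - π) + (a - π) ^ 2 := by
  simp only [Fintype.sum_bool, forecastProb, if_true, Bool.false_eq_true, if_false]
  ring

lemma sq_one_sub_forecastProb_mem_Icc (s : Bool) {a : ℝ} (ha : a ∈ Set.Icc (0 : ℝ) 1) :
    (1 - forecastProb s a) ^ 2 ∈ Set.Icc (0 : ℝ) 1 := by
  have mem := forecastProb_mem_Icc s ha
  exact ⟨sq_nonneg _, pow_le_one₀ (sub_nonneg.2 mem.2) (sub_le_self 1 mem.1)⟩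

lemma measurable_sq_one_sub_forecastProb (s : Bool) {a : X → ℝ} (ha : Measurable a) :
    Measurable fun x => (1 - forecastProb s (a x)) ^ 2 :=
  (measurable_const.sub ((measurable_forecastProb s).comp ha)).pow_const 2

lemma brierRisk_eq_integral (P : Bool → Measure X) [∀ s, IsFiniteMeasure (P s)] {a : X → ℝ}
    (ha : Measurable a) (ha01 : ∀ x, a x ∈ Set.Icc (0 : ℝ) 1) :
    brierRisk P a = 1 / 2 * ∫ x, (posteriorProb P x * (1 - posteriorProb P x) +
      (a x - posteriorProb P x) ^ 2) ∂(P true + P false) := by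
  rw [brierRisk, sum_integral_eq_integral_sum_forecastProb_mul P fun s =>
    .of_mem_Icc 0 1 (measurable_sq_one_sub_forecastProb s ha).aemeasurable
      (.of_forall fun x => sq_one_sub_forecastProb_mem_Icc s (ha01 x))]
  simp only [sum_forecastProb_mul_sq]

lemma brierRisk_posteriorProb (P : Bool → Measure X) [∀ s, IsFiniteMeasure (P s)] :
    brierRisk P (posteriorProb P) = bayesBrierRisk P := by
  rw [brierRisk_eq_integral P (measurable_posteriorProb P) (posteriorProb_mem_Icc P)]
  simp only [sub_self, zero_pow two_ne_zero, add_zero, bayesBrierRisk]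

lemma posteriorProb_mul_one_sub_mem_Icc (P : Bool → Measure X) (x : X) :
    posteriorProb P x * (1 - posteriorProb P x) ∈ Set.Icc (0 : ℝ) (1 / 4) := by
  obtain ⟨h0, h1⟩ := posteriorProb_mem_Icc P x
  exact ⟨mul_nonneg h0 (sub_nonneg.2 h1), by nlinarith [sq_nonneg (posteriorProb P x - 1 / 2)]⟩

lemma integrable_posteriorProb_mul_one_sub (P : Bool → Measure X) [∀ s, IsFiniteMeasure (P s)] :
    Integrable (fun x => posteriorProb P x * (1 - posteriorProb P x)) (P true + P false) :=
  .of_mem_Icc 0 (1 / 4) ((measurable_posteriorProb P).mul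
    (measurable_const.sub (measurable_posteriorProb P))).aemeasurable
    (.of_forall (posteriorProb_mul_one_sub_mem_Icc P))

lemma integrable_sq_posteriorProb_mul_one_sub (P : Bool → Measure X)
    [∀ s, IsFiniteMeasure (P s)] :
    Integrable (fun x => (posteriorProb P x * (1 - posteriorProb P x)) ^ 2)
      (P true + P false) := by
  refine .of_mem_Icc 0 1 (((measurable_posteriorProb P).mul
    (measurable_const.sub (measurable_posteriorProb P))).pow_const 2).aemeasurable
    (.of_forall fun x => ⟨sq_nonneg _, ?_⟩)
  obtain ⟨h0, h1⟩ := posteriorProb_mul_one_sub_mem_Icc P x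
  exact pow_le_one₀ h0 (h1.trans (by norm_num))

lemma bayesBrierRisk_le_brierRisk (P : Bool → Measure X) [∀ s, IsFiniteMeasure (P s)] {a : X → ℝ}
    (ha : Measurable a) (ha01 : ∀ x, a x ∈ Set.Icc (0 : ℝ) 1) :
    bayesBrierRisk P ≤ brierRisk P a := by
  have integrable_sq : Integrable (fun x => (a x - posteriorProb P x) ^ 2) (P true + P false) := by
    refine .of_mem_Icc 0 1 ((ha.sub (measurable_posteriorProb P)).pow_const 2).aemeasurable
      (.of_forall fun x => ⟨sq_nonneg _, (sq_le_one_iff_abs_le_one _).2 ?_⟩)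
    exact abs_sub_le_of_nonneg_of_le (ha01 x).1 (ha01 x).2 (posteriorProb_mem_Icc P x).1
      (posteriorProb_mem_Icc P x).2
  rw [brierRisk_eq_integral P ha ha01, bayesBrierRisk]
  gcongr ?_ * ?_
  exact integral_mono (integrable_posteriorProb_mul_one_sub P)
    ((integrable_posteriorProb_mul_one_sub P).add integrable_sq)
    fun x => le_add_of_nonneg_right (sq_nonneg _)

lemma bayesBrierRisk_nonneg (P : Bool → Measure X) : 0 ≤ bayesBrierRisk P :=
  mul_nonneg one_half_pos.le (integral_nonneg fun x => (posteriorProb_mul_one_sub_mem_Icc P x).1)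

lemma bayesBrierRisk_le_one_div_four (P : Bool → Measure X) [∀ s, IsProbabilityMeasure (P s)] :
    bayesBrierRisk P ≤ 1 / 4 := by
  calc bayesBrierRisk P ≤ 1 / 2 * ∫ _, 1 / 4 ∂(P true + P false) := by
        rw [bayesBrierRisk]
        gcongr ?_ * ?_
        exact integral_mono (integrable_posteriorProb_mul_one_sub P) (integrable_const _)
          fun x => (posteriorProb_mul_one_sub_mem_Icc P x).2
    _ = 1 / 4 := by
        rw [integral_const, measureReal_add_apply, probReal_univ, probReal_univ, smul_eq_mul]
        norm_num

lemma brierRisk_map (P : Bool → Measure X) {f : X → Y} (hf : Measurable f) {a : Y → ℝ}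
    (ha : Measurable a) : brierRisk (fun s => (P s).map f) a = brierRisk P (a ∘ f) := by
  simp only [brierRisk, Function.comp_apply]
  congr! 3 with s
  exact integral_map hf.aemeasurable (measurable_sq_one_sub_forecastProb s ha).aestronglyMeasurable

lemma bayesBrierRisk_le_bayesBrierRisk_map (P : Bool → Measure X) [∀ s, IsFiniteMeasure (P s)]
    {f : X → Y} (hf : Measurable f) :
    bayesBrierRisk P ≤ bayesBrierRisk fun s => (P s).map f := by
  rw [← brierRisk_posteriorProb fun s => (P s).map f,
    brierRisk_map P hf (measurable_posteriorProb _)]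
  exact bayesBrierRisk_le_brierRisk P ((measurable_posteriorProb _).comp hf)
    fun x => posteriorProb_mem_Icc _ (f x)

lemma hellingerAffinity_pow_four_le (P : Bool → Measure X) [∀ s, IsProbabilityMeasure (P s)] :
    hellingerAffinity P ^ 4 / 8 ≤
      ∫ x, (posteriorProb P x * (1 - posteriorProb P x)) ^ 2 ∂(P true + P false) := by
  have mass : (P true + P false).real Set.univ = 2 := by
    rw [measureReal_add_apply, probReal_univ, probReal_univ]; norm_num
  have : NeZero (P true + P false) := ⟨fun h => by simp [h] at mass⟩
  have integrable_pow (k : ℕ) : Integrable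
      (fun x => √(posteriorProb P x * (1 - posteriorProb P x)) ^ k) (P true + P false) := by
    refine .of_mem_Icc 0 1 ((measurable_sqrt_posteriorProb_mul P).pow_const k).aemeasurable
      (.of_forall fun x => ?_)
    have mem := sqrt_mul_one_sub_mem_Icc (posteriorProb_mem_Icc P x)
    exact ⟨pow_nonneg mem.1 k, pow_le_one₀ mem.1 mem.2⟩
  have jensen := (even_two_mul 2).convexOn_pow.map_average_le (μ := P true + P false)
    (f := fun x => √(posteriorProb P x * (1 - posteriorProb P x)))
    (continuous_pow 4).continuousOn isClosed_univ (.of_forall fun _ => Set.mem_univ _)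
    (by simpa using integrable_pow 1) (integrable_pow 4)
  have pow_four (x : X) : √(posteriorProb P x * (1 - posteriorProb P x)) ^ 4 =
      (posteriorProb P x * (1 - posteriorProb P x)) ^ 2 := by
    rw [pow_mul _ 2 2, Real.sq_sqrt (posteriorProb_mul_one_sub_mem_Icc P x).1]
  simp only [average_eq, mass, smul_eq_mul, Nat.reduceMul, pow_four] at jensen
  rw [hellingerAffinity]
  linarith

section Refinement

/-- The forecast used to combine the posteriors `π` and `ρ` of two independent experiments: `π`
moved towards `1` or `0` according to the sign of `√ρ - √(1 - ρ)`. -/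
noncomputable def refinedForecast (π ρ : ℝ) : ℝ := π + π * (1 - π) * (√ρ - √(1 - ρ))

lemma refinedForecast_mem_Icc {π ρ : ℝ} (hπ : π ∈ Set.Icc (0 : ℝ) 1) (hρ : ρ ∈ Set.Icc (0 : ℝ) 1) :
    refinedForecast π ρ ∈ Set.Icc (0 : ℝ) 1 := by
  obtain ⟨lower, upper⟩ := abs_le.1 (abs_sqrt_sub_sqrt_one_sub_le_one hρ)
  have var_nonneg : 0 ≤ π * (1 - π) := mul_nonneg hπ.1 (sub_nonneg.2 hπ.2)
  constructor <;> rw [refinedForecast] <;> nlinarith [sq_nonneg π, sq_nonneg (1 - π)]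

lemma measurable_refinedForecast_posteriorProb (P : Bool → Measure X) (Q : Bool → Measure Y) :
    Measurable fun z : X × Y => refinedForecast (posteriorProb P z.1) (posteriorProb Q z.2) := by
  have := measurable_posteriorProb P
  have := measurable_posteriorProb Q
  unfold refinedForecast
  fun_prop

lemma sum_forecastProb_mul_sq_refinedForecast_le {π ρ : ℝ} (hπ : π ∈ Set.Icc (0 : ℝ) 1)
    (hρ : ρ ∈ Set.Icc (0 : ℝ) 1) :
    ∑ s, forecastProb s π * forecastProb s ρ * (1 - forecastProb s (refinedForecast π ρ)) ^ 2 ≤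
      ∑ s, forecastProb s π * forecastProb s ρ * (1 - forecastProb s π) ^ 2 -
        (π * (1 - π)) ^ 2 * (√ρ - √(1 - ρ)) ^ 2 := by
  have sq_sqrt : √ρ ^ 2 = ρ := Real.sq_sqrt hρ.1
  have sq_sqrt_one_sub : √(1 - ρ) ^ 2 = 1 - ρ := Real.sq_sqrt (sub_nonneg.2 hρ.2)
  have one_le_sum : 1 ≤ √ρ + √(1 - ρ) := by
    nlinarith [Real.sqrt_nonneg ρ, Real.sqrt_nonneg (1 - ρ)]
  have agree_le : π * ρ + (1 - π) * (1 - ρ) ≤ 1 := by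
    nlinarith [mul_nonneg hπ.1 (sub_nonneg.2 hρ.2), mul_nonneg hρ.1 (sub_nonneg.2 hπ.2)]
  have change_eq :
      ∑ s, forecastProb s π * forecastProb s ρ * (1 - forecastProb s (refinedForecast π ρ)) ^ 2 =
        ∑ s, forecastProb s π * forecastProb s ρ * (1 - forecastProb s π) ^ 2 -
          (π * (1 - π)) ^ 2 * (√ρ - √(1 - ρ)) ^ 2 *
            (2 * (√ρ + √(1 - ρ)) - (π * ρ + (1 - π) * (1 - ρ))) := by
    simp only [refinedForecast, Fintype.sum_bool, forecastProb, if_true, Bool.false_eq_true,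
      if_false]
    linear_combination 2 * (π * (1 - π)) ^ 2 * (√ρ - √(1 - ρ)) * (sq_sqrt - sq_sqrt_one_sub)
  rw [change_eq]
  exact sub_le_sub_left (le_mul_of_one_le_right (by positivity) (by linarith)) _

lemma integral_prod_eq_integral_forecastProb_mul (P : Bool → Measure X) (Q : Bool → Measure Y)
    [∀ s, IsFiniteMeasure (P s)] [∀ s, IsFiniteMeasure (Q s)] (s : Bool) (f : X × Y → ℝ) :
    ∫ z, f z ∂((P s).prod (Q s)) =
      ∫ z, forecastProb s (posteriorProb P z.1) * forecastProb s (posteriorProb Q z.2) * f z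
        ∂((P true + P false).prod (Q true + Q false)) := by
  have hP := (measurable_forecastProb_posteriorProb P s).ennreal_ofReal
  have hQ := (measurable_forecastProb_posteriorProb Q s).ennreal_ofReal
  conv_lhs => rw [← withDensity_forecastProb_posteriorProb P s,
    ← withDensity_forecastProb_posteriorProb Q s, prod_withDensity hP hQ]
  have measurable_mul : Measurable fun z : X × Y =>
      ENNReal.ofReal (forecastProb s (posteriorProb P z.1)) *
        ENNReal.ofReal (forecastProb s (posteriorProb Q z.2)) :=
    (hP.comp measurable_fst).mul (hQ.comp measurable_snd)
  rw [integral_withDensity_eq_integral_toReal_smul measurable_mul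
    (.of_forall fun _ => ENNReal.mul_lt_top ENNReal.ofReal_lt_top ENNReal.ofReal_lt_top)]
  refine integral_congr_ae (.of_forall fun z => ?_)
  simp only [ENNReal.toReal_mul, smul_eq_mul,
    ENNReal.toReal_ofReal (forecastProb_posteriorProb_mem_Icc _ s _).1]

lemma integrable_forecastProb_mul_forecastProb_mul_sq (P : Bool → Measure X) (Q : Bool → Measure Y)
    [∀ s, IsFiniteMeasure (P s)] [∀ s, IsFiniteMeasure (Q s)] {a : X × Y → ℝ} (ha : Measurable a)
    (ha01 : ∀ z, a z ∈ Set.Icc (0 : ℝ) 1) (s : Bool) :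
    Integrable (fun z => forecastProb s (posteriorProb P z.1) * forecastProb s (posteriorProb Q z.2)
      * (1 - forecastProb s (a z)) ^ 2) ((P true + P false).prod (Q true + Q false)) := by
  have measurable_mul : Measurable fun z : X × Y =>
      forecastProb s (posteriorProb P z.1) * forecastProb s (posteriorProb Q z.2) :=
    ((measurable_forecastProb_posteriorProb P s).comp measurable_fst).mul
      ((measurable_forecastProb_posteriorProb Q s).comp measurable_snd)
  exact .of_mem_Icc 0 1
    (measurable_mul.mul (measurable_sq_one_sub_forecastProb s ha)).aemeasurable
    (.of_forall fun z => unitInterval.mul_mem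
      (unitInterval.mul_mem (forecastProb_posteriorProb_mem_Icc P s z.1)
        (forecastProb_posteriorProb_mem_Icc Q s z.2))
      (sq_one_sub_forecastProb_mem_Icc s (ha01 z)))

lemma brierRisk_prod (P : Bool → Measure X) (Q : Bool → Measure Y)
    [∀ s, IsFiniteMeasure (P s)] [∀ s, IsFiniteMeasure (Q s)] {a : X × Y → ℝ} (ha : Measurable a)
    (ha01 : ∀ z, a z ∈ Set.Icc (0 : ℝ) 1) :
    brierRisk (fun s => (P s).prod (Q s)) a =
      1 / 2 * ∫ z, ∑ s, forecastProb s (posteriorProb P z.1) * forecastProb s (posteriorProb Q z.2)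
        * (1 - forecastProb s (a z)) ^ 2 ∂((P true + P false).prod (Q true + Q false)) := by
  rw [integral_finsetSum _ fun s _ =>
    integrable_forecastProb_mul_forecastProb_mul_sq P Q ha ha01 s]
  simp only [brierRisk, ← integral_prod_eq_integral_forecastProb_mul]

lemma brierRisk_prod_comp_fst (P : Bool → Measure X) (Q : Bool → Measure Y)
    [∀ s, IsFiniteMeasure (P s)] [∀ s, IsProbabilityMeasure (Q s)] {a : X → ℝ}
    (ha : Measurable a) :
    brierRisk (fun s => (P s).prod (Q s)) (fun z => a z.1) = brierRisk P a := by
  have map_fst (s : Bool) : ((P s).prod (Q s)).map Prod.fst = P s := by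
    rw [Measure.map_fst_prod, measure_univ, one_smul]
  refine (brierRisk_map (fun s => (P s).prod (Q s)) measurable_fst ha).symm.trans ?_
  simp only [map_fst]

lemma brierRisk_prod_refinedForecast_le (P : Bool → Measure X) (Q : Bool → Measure Y)
    [∀ s, IsFiniteMeasure (P s)] [∀ s, IsFiniteMeasure (Q s)] :
    brierRisk (fun s => (P s).prod (Q s))
        (fun z => refinedForecast (posteriorProb P z.1) (posteriorProb Q z.2)) ≤
      brierRisk (fun s => (P s).prod (Q s)) (fun z => posteriorProb P z.1) -
        1 / 2 * ∫ z, (posteriorProb P z.1 * (1 - posteriorProb P z.1)) ^ 2 *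
          (√(posteriorProb Q z.2) - √(1 - posteriorProb Q z.2)) ^ 2
          ∂((P true + P false).prod (Q true + Q false)) := by
  have fst_mem (z : X × Y) := posteriorProb_mem_Icc P z.1
  have snd_mem (z : X × Y) := posteriorProb_mem_Icc Q z.2
  have measurable_fst_post : Measurable fun z : X × Y => posteriorProb P z.1 :=
    (measurable_posteriorProb P).comp measurable_fst
  have measurable_refined := measurable_refinedForecast_posteriorProb P Q
  have refined_mem (z : X × Y) := refinedForecast_mem_Icc (fst_mem z) (snd_mem z)
  have integrable_loss {a : X × Y → ℝ} (ha : Measurable a)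
      (ha01 : ∀ z, a z ∈ Set.Icc (0 : ℝ) 1) := integrable_finsetSum Finset.univ fun s _ =>
    integrable_forecastProb_mul_forecastProb_mul_sq P Q ha ha01 s
  have integrable_gain :=
    (integrable_sq_posteriorProb_mul_one_sub P).mul_prod (integrable_sq_sqrt_posteriorProb_sub Q)
  rw [brierRisk_prod P Q measurable_refined refined_mem,
    brierRisk_prod P Q measurable_fst_post fst_mem, ← mul_sub,
    ← integral_sub (integrable_loss measurable_fst_post fst_mem) integrable_gain]
  gcongr ?_ * ?_
  exact integral_mono (integrable_loss measurable_refined refined_mem)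
    ((integrable_loss measurable_fst_post fst_mem).sub integrable_gain)
    fun z => sum_forecastProb_mul_sq_refinedForecast_le (fst_mem z) (snd_mem z)

lemma bayesBrierRisk_prod_le (P : Bool → Measure X) (Q : Bool → Measure Y)
    [∀ s, IsProbabilityMeasure (P s)] [∀ s, IsProbabilityMeasure (Q s)] :
    bayesBrierRisk (fun s => (P s).prod (Q s)) ≤
      bayesBrierRisk P - hellingerAffinity P ^ 4 / 8 * (1 - hellingerAffinity Q) := by
  calc bayesBrierRisk (fun s => (P s).prod (Q s))
      ≤ brierRisk (fun s => (P s).prod (Q s))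
          (fun z => refinedForecast (posteriorProb P z.1) (posteriorProb Q z.2)) :=
        bayesBrierRisk_le_brierRisk _ (measurable_refinedForecast_posteriorProb P Q) fun z =>
          refinedForecast_mem_Icc (posteriorProb_mem_Icc P z.1) (posteriorProb_mem_Icc Q z.2)
    _ ≤ brierRisk (fun s => (P s).prod (Q s)) (fun z => posteriorProb P z.1) - 1 / 2 *
          ∫ z, (posteriorProb P z.1 * (1 - posteriorProb P z.1)) ^ 2 *
            (√(posteriorProb Q z.2) - √(1 - posteriorProb Q z.2)) ^ 2
            ∂((P true + P false).prod (Q true + Q false)) :=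
        brierRisk_prod_refinedForecast_le P Q
    _ = bayesBrierRisk P - (∫ x, (posteriorProb P x * (1 - posteriorProb P x)) ^ 2
          ∂(P true + P false)) * (1 - hellingerAffinity Q) := by
        rw [brierRisk_prod_comp_fst P Q (measurable_posteriorProb P), brierRisk_posteriorProb,
          integral_prod_mul (fun x => (posteriorProb P x * (1 - posteriorProb P x)) ^ 2)
            (fun y => (√(posteriorProb Q y) - √(1 - posteriorProb Q y)) ^ 2),
          integral_sq_sqrt_posteriorProb_sub]
        ring
    _ ≤ bayesBrierRisk P - hellingerAffinity P ^ 4 / 8 * (1 - hellingerAffinity Q) := by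
        gcongr
        · exact sub_nonneg.2 (hellingerAffinity_le_one Q)
        · exact hellingerAffinity_pow_four_le P

end Refinement

lemma pi_fin_add_map (μ : Measure X) [SigmaFinite μ] (n m : ℕ) :
    (Measure.pi fun _ : Fin (n + m) => μ).map (fun x => (x ∘ Fin.castAdd m, x ∘ Fin.natAdd n)) =
      (Measure.pi fun _ : Fin n => μ).prod (Measure.pi fun _ : Fin m => μ) := by
  have regroup := (measurePreserving_sumPiEquivProdPi fun _ : Fin n ⊕ Fin m => μ).comp
    (measurePreserving_piCongrLeft (fun _ : Fin (n + m) => μ) finSumFinEquiv).symm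
  exact regroup.map_eq

lemma bayesBrierRisk_pi_add_le (P : Bool → Measure X) [∀ s, IsProbabilityMeasure (P s)] (n m : ℕ) :
    bayesBrierRisk (fun s => Measure.pi fun _ : Fin (n + m) => P s) ≤
      bayesBrierRisk (fun s => Measure.pi fun _ : Fin n => P s) -
        (hellingerAffinity P ^ n) ^ 4 / 8 * (1 - hellingerAffinity P ^ m) := by
  have split_measurable : Measurable fun x : Fin (n + m) → X =>
      (x ∘ Fin.castAdd m, x ∘ Fin.natAdd n) := by
    unfold Function.comp
    fun_prop
  calc bayesBrierRisk (fun s => Measure.pi fun _ : Fin (n + m) => P s)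
      ≤ bayesBrierRisk fun s =>
          (Measure.pi fun _ : Fin n => P s).prod (Measure.pi fun _ : Fin m => P s) := by
        simpa only [pi_fin_add_map] using bayesBrierRisk_le_bayesBrierRisk_map
          (fun s => Measure.pi fun _ : Fin (n + m) => P s) split_measurable
    _ ≤ bayesBrierRisk (fun s => Measure.pi fun _ : Fin n => P s) -
          (hellingerAffinity P ^ n) ^ 4 / 8 * (1 - hellingerAffinity P ^ m) := by
        simpa only [hellingerAffinity_pi_const, Fintype.card_fin] using bayesBrierRisk_prod_le
          (fun s => Measure.pi fun _ : Fin n => P s) fun s => Measure.pi fun _ : Fin m => P s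

lemma one_sub_pow_le_inv_one_add_mul {h : ℝ} (h0 : 0 ≤ h) (h1 : h ≤ 1) (m : ℕ) :
    (1 - h) ^ m ≤ (1 + m * h)⁻¹ := by
  calc (1 - h) ^ m ≤ ((1 + h)⁻¹) ^ m := by
        refine pow_le_pow_left₀ (sub_nonneg.2 h1) ?_ m
        rw [← one_div, le_div_iff₀ (by positivity)]
        nlinarith
    _ = ((1 + h) ^ m)⁻¹ := inv_pow _ _
    _ ≤ (1 + m * h)⁻¹ := by
        gcongr
        exact one_add_mul_le_pow (by linarith) m

lemma le_one_sub_one_sub_pow_ceil {c r h : ℝ} {n : ℕ} (hc : 0 < c) (hr : 1 ≤ r) (hn : 1 ≤ n)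
    (h_lower : 1 / (10 * n) ≤ h) (h_le_one : h ≤ 1) :
    c / (10 + c) / r ≤ 1 - (1 - h) ^ ⌈c * n / r⌉₊ := by
  have : (0 : ℝ) < n := by exact_mod_cast hn
  have : 0 < r := by linarith
  have h_nonneg : 0 ≤ h := le_trans (by positivity) h_lower
  have ceil_mul_ge : c / 10 / r ≤ ⌈c * n / r⌉₊ * h := by
    calc c / 10 / r = c * n / r * (1 / (10 * n)) := by field_simp
      _ ≤ ⌈c * n / r⌉₊ * h := by gcongr; exact Nat.le_ceil _
  calc c / (10 + c) / r = c / ((10 + c) * r) := div_div _ _ _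
    _ ≤ c / (10 * r + c) := by gcongr; nlinarith
    _ = 1 - (1 + c / 10 / r)⁻¹ := by field_simp; ring
    _ ≤ 1 - (1 + ⌈c * n / r⌉₊ * h)⁻¹ := by gcongr
    _ ≤ 1 - (1 - h) ^ ⌈c * n / r⌉₊ :=
        sub_le_sub_left (one_sub_pow_le_inv_one_add_mul h_nonneg h_le_one _) 1

lemma four_fifths_le_one_sub_pow {h : ℝ} {n : ℕ} (h_le_one : h ≤ 1) (hnh : n * h ≤ 1 / 5) :
    4 / 5 ≤ (1 - h) ^ n := by
  calc (4 / 5 : ℝ) ≤ 1 + n * -h := by linarith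
    _ ≤ (1 + -h) ^ n := one_add_mul_le_pow (by linarith) n
    _ = (1 - h) ^ n := by rw [← sub_eq_add_neg]

lemma bayesBrierRisk_pi_add_ceil_le {c r : ℝ} {n : ℕ} (hc : 0 < c) (hr : 1 ≤ r) (hn : 1 ≤ n)
    (P : Bool → Measure X) [∀ s, IsProbabilityMeasure (P s)]
    (h_lower : 1 / (10 * n) ≤ hellingerSq (P true) (P false))
    (h_upper : hellingerSq (P true) (P false) ≤ 1 / (5 * n)) :
    bayesBrierRisk (fun s => Measure.pi fun _ : Fin (n + ⌈c * n / r⌉₊) => P s) +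
        32 / 625 * (c / (10 + c)) / r ≤
      bayesBrierRisk (fun s => Measure.pi fun _ : Fin n => P s) := by
  have one_le_n : (1 : ℝ) ≤ n := by exact_mod_cast hn
  have affinity_eq : hellingerAffinity P = 1 - hellingerSq (P true) (P false) := by
    rw [hellingerSq_eq_one_sub_hellingerAffinity, sub_sub_cancel]
  set h := hellingerSq (P true) (P false)
  have : 0 ≤ h := le_trans (by positivity) h_lower
  have nh_le : n * h ≤ 1 / 5 := by
    calc n * h ≤ n * (1 / (5 * n)) := by gcongr
      _ = 1 / 5 := by field_simp
  have h_le_one : h ≤ 1 := by nlinarith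
  have decrease_ge : 32 / 625 * (c / (10 + c)) / r ≤
      ((1 - h) ^ n) ^ 4 / 8 * (1 - (1 - h) ^ ⌈c * n / r⌉₊) := by
    calc 32 / 625 * (c / (10 + c)) / r = (4 / 5) ^ 4 / 8 * (c / (10 + c) / r) := by ring
      _ ≤ ((1 - h) ^ n) ^ 4 / 8 * (1 - (1 - h) ^ ⌈c * n / r⌉₊) := by
          gcongr ?_ ^ 4 / 8 * ?_
          · exact four_fifths_le_one_sub_pow h_le_one nh_le
          · exact le_one_sub_one_sub_pow_ceil hc hr hn h_lower h_le_one
  have decrease := bayesBrierRisk_pi_add_le P n ⌈c * n / r⌉₊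
  rw [affinity_eq] at decrease
  linarith

end BrierRisk

section BrierScore

/-- The score `1 - l (1 - q)²` of a forecast that assigns probability `q` to the realised bit `s`:
a reward which the Brier loss decreases at rate `l`. -/
noncomputable def brierScore (l : ℝ) (s : Bool) (a : ℝ) : ℝ := 1 - l * (1 - forecastProb s a) ^ 2

variable {X : Type*} [MeasurableSpace X] {l : ℝ}

lemma brierScore_mem_Icc (hl : l ∈ Set.Icc (0 : ℝ) 1) (s : Bool) {a : ℝ}
    (ha : a ∈ Set.Icc (0 : ℝ) 1) : brierScore l s a ∈ Set.Icc (0 : ℝ) 1 :=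
  Set.Icc.mem_iff_one_sub_mem.1 (unitInterval.mul_mem hl (sq_one_sub_forecastProb_mem_Icc s ha))

lemma measurable_brierScore (l : ℝ) (s : Bool) {a : X → ℝ} (ha : Measurable a) :
    Measurable fun x => brierScore l s (a x) :=
  measurable_const.sub ((measurable_sq_one_sub_forecastProb s ha).const_mul l)

lemma sum_forecastProb_mul_brierScore_le (hl : 0 ≤ l) (π a : ℝ) :
    ∑ s, forecastProb s π * brierScore l s a ≤ 1 - l * (π * (1 - π)) := by
  have sum_forecastProb : ∑ s, forecastProb s π = 1 := by simp [forecastProb]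
  calc ∑ s, forecastProb s π * brierScore l s a
      = ∑ s, forecastProb s π - l * ∑ s, forecastProb s π * (1 - forecastProb s a) ^ 2 := by
        rw [Finset.mul_sum, ← Finset.sum_sub_distrib]
        exact Finset.sum_congr rfl fun s _ => by rw [brierScore]; ring
    _ = 1 - l * (π * (1 - π)) - l * (a - π) ^ 2 := by
        rw [sum_forecastProb, sum_forecastProb_mul_sq]; ring
    _ ≤ 1 - l * (π * (1 - π)) := sub_le_self _ (mul_nonneg hl (sq_nonneg _))

variable (P : Bool → Measure X) [∀ s, IsProbabilityMeasure (P s)]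

lemma sum_integral_sub_mul_sq_one_sub_forecastProb {a : X → ℝ} (ha : Measurable a)
    (ha01 : ∀ x, a x ∈ Set.Icc (0 : ℝ) 1) (u v : ℝ) :
    ∑ s, ∫ x, (u - v * (1 - forecastProb s (a x)) ^ 2) ∂(P s) = 2 * (u - v * brierRisk P a) := by
  have integrable_sq (s : Bool) : Integrable (fun x => (1 - forecastProb s (a x)) ^ 2) (P s) :=
    .of_mem_Icc 0 1 (measurable_sq_one_sub_forecastProb s ha).aemeasurable
      (.of_forall fun x => sq_one_sub_forecastProb_mem_Icc s (ha01 x))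
  have integral_eq (s : Bool) : ∫ x, (u - v * (1 - forecastProb s (a x)) ^ 2) ∂(P s) =
      u - v * ∫ x, (1 - forecastProb s (a x)) ^ 2 ∂(P s) := by
    rw [integral_sub (integrable_const _) ((integrable_sq s).const_mul v), integral_const,
      integral_const_mul, probReal_univ, one_smul]
  simp only [integral_eq, brierRisk, Fintype.sum_bool]
  ring

lemma sum_integral_brierScore_posteriorProb (l : ℝ) :
    ∑ s, ∫ x, brierScore l s (posteriorProb P x) ∂(P s) = 2 * (1 - l * bayesBrierRisk P) := by
  rw [← brierRisk_posteriorProb P]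
  exact sum_integral_sub_mul_sq_one_sub_forecastProb P (measurable_posteriorProb P)
    (posteriorProb_mem_Icc P) 1 l

lemma sum_integral_sq_brierScore_posteriorProb_le (l : ℝ) :
    ∑ s, ∫ x, brierScore l s (posteriorProb P x) ^ 2 ∂(P s) ≤
      2 * (1 + l ^ 2 - 2 * l * bayesBrierRisk P) := by
  rw [← brierRisk_posteriorProb P, ← sum_integral_sub_mul_sq_one_sub_forecastProb P
    (measurable_posteriorProb P) (posteriorProb_mem_Icc P)]
  have loss_mem (s : Bool) (x : X) :=
    sq_one_sub_forecastProb_mem_Icc s (posteriorProb_mem_Icc P x)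
  refine Finset.sum_le_sum fun s _ => integral_mono_of_nonneg (.of_forall fun x => sq_nonneg _) ?_
    (.of_forall fun x => ?_)
  · exact (integrable_const _).sub (.const_mul (.of_mem_Icc 0 1
      (measurable_sq_one_sub_forecastProb s (measurable_posteriorProb P)).aemeasurable
      (.of_forall (loss_mem s))) _)
  · have sq_loss_le : l ^ 2 * ((1 - forecastProb s (posteriorProb P x)) ^ 2) ^ 2 ≤ l ^ 2 :=
      mul_le_of_le_one_right (sq_nonneg l) (pow_le_one₀ (loss_mem s x).1 (loss_mem s x).2)
    simp only [brierScore]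
    linarith

lemma integral_one_sub_mul_posteriorProb_mul_one_sub (l : ℝ) :
    ∫ x, (1 - l * (posteriorProb P x * (1 - posteriorProb P x))) ∂(P true + P false) =
      2 * (1 - l * bayesBrierRisk P) := by
  rw [integral_sub (integrable_const _) ((integrable_posteriorProb_mul_one_sub P).const_mul l),
    integral_const, integral_const_mul, measureReal_add_apply, probReal_univ, probReal_univ,
    bayesBrierRisk]
  simp only [smul_eq_mul]
  ring

end BrierScore

section Hypercube

lemma integral_bind_kernel {X Y : Type*} [MeasurableSpace X] [MeasurableSpace Y] (μ : Measure X)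
    [SFinite μ] (κ : Kernel X Y) [IsSFiniteKernel κ] {f : Y → ℝ} (hf : Integrable f (μ.bind κ)) :
    ∫ y, f y ∂(μ.bind κ) = ∫ x, ∫ y, f y ∂(κ x) ∂μ := by
  rw [Measure.comp_eq_comp_const_apply] at hf ⊢
  rw [Kernel.integral_comp hf, Kernel.const_apply]

variable {ι : Type*} [Fintype ι] {X : ι → Type*} [∀ j, MeasurableSpace (X j)]
  (P : ∀ j, Bool → Measure (X j)) [∀ j s, IsProbabilityMeasure (P j s)]

lemma sum_integral_pi_prod [DecidableEq ι] (f : ∀ j, Bool → X j → ℝ) :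
    ∑ θ : ι → Bool, ∫ x, ∏ j, f j (θ j) (x j) ∂(Measure.pi fun j => P j (θ j)) =
      ∏ j, ∑ s, ∫ x, f j s x ∂(P j s) := by
  rw [Fintype.prod_sum]
  exact Finset.sum_congr rfl fun θ _ => integral_fintype_prod_eq_prod fun j => f j (θ j)

lemma integral_pi_eq_integral_prod_forecastProb_mul (θ : ι → Bool) (f : (∀ j, X j) → ℝ) :
    ∫ x, f x ∂(Measure.pi fun j => P j (θ j)) =
      ∫ x, (∏ j, forecastProb (θ j) (posteriorProb (P j) (x j))) * f x
        ∂(Measure.pi fun j => P j true + P j false) := by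
  have measurable_density : Measurable fun x : ∀ j, X j =>
      ENNReal.ofReal (∏ j, forecastProb (θ j) (posteriorProb (P j) (x j))) :=
    (Finset.measurable_prod _ fun j _ => (measurable_forecastProb_posteriorProb (P j) (θ j)).comp
      (measurable_pi_apply j)).ennreal_ofReal
  rw [pi_eq_withDensity_prod_forecastProb, integral_withDensity_eq_integral_toReal_smul
    measurable_density (.of_forall fun _ => ENNReal.ofReal_lt_top)]
  refine integral_congr_ae (.of_forall fun x => ?_)
  simp only [smul_eq_mul, ENNReal.toReal_ofReal (Finset.prod_nonneg fun j _ =>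
    (forecastProb_posteriorProb_mem_Icc (P j) (θ j) (x j)).1)]

lemma prod_mem_Icc {f : ι → ℝ} (hf : ∀ j, f j ∈ Set.Icc (0 : ℝ) 1) :
    ∏ j, f j ∈ Set.Icc (0 : ℝ) 1 :=
  ⟨Finset.prod_nonneg fun j _ => (hf j).1, Finset.prod_le_one (fun j _ => (hf j).1)
    fun j _ => (hf j).2⟩

variable {W : Type*} [MeasurableSpace W] {l : ℝ} {a : ι → W → ℝ}

lemma measurable_prod_brierScore (ha : ∀ j, Measurable (a j)) (l : ℝ) (θ : ι → Bool) :
    Measurable fun w => ∏ j, brierScore l (θ j) (a j w) :=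
  Finset.measurable_prod _ fun j _ => measurable_brierScore l (θ j) (ha j)

lemma memLp_prod_brierScore (μ : Measure W) [IsFiniteMeasure μ] (hl : l ∈ Set.Icc (0 : ℝ) 1)
    (ha : ∀ j, Measurable (a j)) (ha01 : ∀ j w, a j w ∈ Set.Icc (0 : ℝ) 1) (θ : ι → Bool)
    (p : ℝ≥0∞) : MemLp (fun w => ∏ j, brierScore l (θ j) (a j w)) p μ :=
  memLp_of_bounded
    (.of_forall fun w => prod_mem_Icc fun j => brierScore_mem_Icc hl (θ j) (ha01 j w))
    (measurable_prod_brierScore ha l θ).aestronglyMeasurable p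

lemma integrable_prod_brierScore (μ : Measure W) [IsFiniteMeasure μ] (hl : l ∈ Set.Icc (0 : ℝ) 1)
    (ha : ∀ j, Measurable (a j)) (ha01 : ∀ j w, a j w ∈ Set.Icc (0 : ℝ) 1) (θ : ι → Bool) :
    Integrable (fun w => ∏ j, brierScore l (θ j) (a j w)) μ :=
  memLp_one_iff_integrable.1 (memLp_prod_brierScore μ hl ha ha01 θ 1)

lemma sum_prod_forecastProb_mul_integral_prod_brierScore_le [DecidableEq ι] (μ : Measure W)
    [IsProbabilityMeasure μ] (hl : l ∈ Set.Icc (0 : ℝ) 1) (ha : ∀ j, Measurable (a j))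
    (ha01 : ∀ j w, a j w ∈ Set.Icc (0 : ℝ) 1) {π : ι → ℝ} (hπ : ∀ j, π j ∈ Set.Icc (0 : ℝ) 1) :
    ∑ θ : ι → Bool, (∏ j, forecastProb (θ j) (π j)) *
        ∫ w, ∏ j, brierScore l (θ j) (a j w) ∂μ ≤ ∏ j, (1 - l * (π j * (1 - π j))) := by
  have integrable_term (θ : ι → Bool) : Integrable (fun w =>
      (∏ j, forecastProb (θ j) (π j)) * ∏ j, brierScore l (θ j) (a j w)) μ :=
    (integrable_prod_brierScore μ hl ha ha01 θ).const_mul _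
  have le_prod (w : W) : ∑ θ : ι → Bool, (∏ j, forecastProb (θ j) (π j)) *
      ∏ j, brierScore l (θ j) (a j w) ≤ ∏ j, (1 - l * (π j * (1 - π j))) := by
    simp only [← Finset.prod_mul_distrib]
    rw [← Fintype.prod_sum fun j s => forecastProb s (π j) * brierScore l s (a j w)]
    exact Finset.prod_le_prod (fun j _ => Finset.sum_nonneg fun s _ => mul_nonneg
      (forecastProb_mem_Icc s (hπ j)).1 (brierScore_mem_Icc hl s (ha01 j w)).1)
      fun j _ => sum_forecastProb_mul_brierScore_le hl.1 (π j) (a j w)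
  simp only [← integral_const_mul]
  rw [← integral_finsetSum _ fun θ _ => integrable_term θ]
  simpa using integral_mono (integrable_finsetSum _ fun θ _ => integrable_term θ)
    (integrable_const _) le_prod

/-- Whatever is computed from the product data, the posteriors of the individual coordinates are
still optimal, because the prior on the hypercube makes the coordinates independent. -/
lemma sum_integral_bind_prod_brierScore_le [DecidableEq ι] (κ : Kernel (∀ j, X j) W)
    [IsMarkovKernel κ] (hl : l ∈ Set.Icc (0 : ℝ) 1) (ha : ∀ j, Measurable (a j))
    (ha01 : ∀ j w, a j w ∈ Set.Icc (0 : ℝ) 1) :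
    ∑ θ : ι → Bool, ∫ w, ∏ j, brierScore l (θ j) (a j w)
        ∂((Measure.pi fun j => P j (θ j)).bind κ) ≤
      ∏ j, 2 * (1 - l * bayesBrierRisk (P j)) := by
  set μ := Measure.pi fun j => P j true + P j false
  set score : (ι → Bool) → (∀ j, X j) → ℝ := fun θ x => ∫ w, ∏ j, brierScore l (θ j) (a j w) ∂(κ x)
  have integrable_score (θ : ι → Bool) : Integrable (score θ) μ := by
    refine .of_mem_Icc 0 1 (measurable_prod_brierScore ha l
      θ).stronglyMeasurable.integral_kernel.measurable.aemeasurable (.of_forall fun x => ?_)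
    have mem (w : W) := prod_mem_Icc fun j => brierScore_mem_Icc hl (θ j) (ha01 j w)
    refine ⟨integral_nonneg fun w => (mem w).1, ?_⟩
    simpa using integral_mono (integrable_prod_brierScore (κ x) hl ha ha01 θ)
      (integrable_const 1) fun w => (mem w).2
  have integrable_weighted (θ : ι → Bool) : Integrable (fun x =>
      (∏ j, forecastProb (θ j) (posteriorProb (P j) (x j))) * score θ x) μ := by
    have mem (x : ∀ j, X j) := prod_mem_Icc fun j =>
      forecastProb_posteriorProb_mem_Icc (P j) (θ j) (x j)
    refine (integrable_score θ).bdd_mul (c := 1) (Finset.measurable_prod _ fun j _ =>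
      (measurable_forecastProb_posteriorProb (P j) (θ j)).comp
        (measurable_pi_apply j)).aestronglyMeasurable (.of_forall fun x => ?_)
    rw [Real.norm_of_nonneg (mem x).1]
    exact (mem x).2
  calc ∑ θ : ι → Bool, ∫ w, ∏ j, brierScore l (θ j) (a j w)
        ∂((Measure.pi fun j => P j (θ j)).bind κ)
      = ∑ θ, ∫ x, (∏ j, forecastProb (θ j) (posteriorProb (P j) (x j))) * score θ x ∂μ := by
        refine Finset.sum_congr rfl fun θ _ => ?_
        rw [integral_bind_kernel _ _ (integrable_prod_brierScore _ hl ha ha01 θ)]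
        exact integral_pi_eq_integral_prod_forecastProb_mul P θ (score θ)
    _ = ∫ x, ∑ θ, (∏ j, forecastProb (θ j) (posteriorProb (P j) (x j))) * score θ x ∂μ :=
        (integral_finsetSum _ fun θ _ => integrable_weighted θ).symm
    _ ≤ ∫ x, ∏ j, (1 - l * (posteriorProb (P j) (x j) * (1 - posteriorProb (P j) (x j)))) ∂μ :=
        integral_mono (integrable_finsetSum _ fun θ _ => integrable_weighted θ)
          (Integrable.fintype_prod_dep fun j => (integrable_const _).sub
            ((integrable_posteriorProb_mul_one_sub (P j)).const_mul l))
          fun x => sum_prod_forecastProb_mul_integral_prod_brierScore_le (κ x) hl ha ha01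
            fun j => posteriorProb_mem_Icc (P j) (x j)
    _ = ∏ j, 2 * (1 - l * bayesBrierRisk (P j)) := by
        rw [integral_fintype_prod_eq_prod fun j x =>
          1 - l * (posteriorProb (P j) x * (1 - posteriorProb (P j) x))]
        simp only [integral_one_sub_mul_posteriorProb_mul_one_sub]

lemma sum_integral_prod_brierScore_posteriorProb [DecidableEq ι] (l : ℝ) :
    ∑ θ : ι → Bool, ∫ x, ∏ j, brierScore l (θ j) (posteriorProb (P j) (x j))
        ∂(Measure.pi fun j => P j (θ j)) = ∏ j, 2 * (1 - l * bayesBrierRisk (P j)) := by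
  rw [sum_integral_pi_prod P fun j s x => brierScore l s (posteriorProb (P j) x)]
  simp only [sum_integral_brierScore_posteriorProb]

lemma sum_integral_sq_prod_brierScore_posteriorProb_le [DecidableEq ι] (l : ℝ) :
    ∑ θ : ι → Bool, ∫ x, (∏ j, brierScore l (θ j) (posteriorProb (P j) (x j))) ^ 2
        ∂(Measure.pi fun j => P j (θ j)) ≤
      ∏ j, 2 * (1 + l ^ 2 - 2 * l * bayesBrierRisk (P j)) := by
  simp only [← Finset.prod_pow]
  rw [sum_integral_pi_prod P fun j s x => brierScore l s (posteriorProb (P j) x) ^ 2]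
  exact Finset.prod_le_prod (fun j _ => Finset.sum_nonneg fun s _ =>
    integral_nonneg fun x => sq_nonneg _) fun j _ =>
      sum_integral_sq_brierScore_posteriorProb_le (P j) l

lemma prod_one_sub_bayesBrierRisk_sub_le {Y : ι → Type*} [∀ j, MeasurableSpace (Y j)]
    (Q : ∀ j, Bool → Measure (Y j)) [∀ j s, IsProbabilityMeasure (Q j s)]
    (κ : Kernel (∀ j, X j) (∀ j, Y j)) [IsMarkovKernel κ] (hl : l ∈ Set.Icc (0 : ℝ) 1) {t : ℝ}
    (ht : ∀ θ : ι → Bool, tvDist (Measure.pi fun j => Q j (θ j))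
      ((Measure.pi fun j => P j (θ j)).bind κ) ≤ t) :
    ∏ j, (1 - l * bayesBrierRisk (Q j)) - ∏ j, (1 - l * bayesBrierRisk (P j)) ≤
      √(t * ∏ j, (1 + l ^ 2 - 2 * l * bayesBrierRisk (Q j))) := by
  classical
  set N : ℝ := 2 ^ Fintype.card ι
  set score : (ι → Bool) → (∀ j, Y j) → ℝ :=
    fun θ y => ∏ j, brierScore l (θ j) (posteriorProb (Q j) (y j))
  set target : (ι → Bool) → Measure (∀ j, Y j) := fun θ => Measure.pi fun j => Q j (θ j)
  set simulated : (ι → Bool) → Measure (∀ j, Y j) :=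
    fun θ => (Measure.pi fun j => P j (θ j)).bind κ
  have prod_two_mul (x : ι → ℝ) : ∏ j, 2 * x j = N * ∏ j, x j := by
    rw [Finset.prod_mul_distrib, Finset.prod_const, Finset.card_univ]
  have measurable_post (j : ι) : Measurable fun y : ∀ j, Y j => posteriorProb (Q j) (y j) :=
    (measurable_posteriorProb (Q j)).comp (measurable_pi_apply j)
  have post_mem (j : ι) (y : ∀ j, Y j) := posteriorProb_mem_Icc (Q j) (y j)
  have sum_simulated_le := sum_integral_bind_prod_brierScore_le P κ hl measurable_post post_mem
  have sum_target_eq := sum_integral_prod_brierScore_posteriorProb Q l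
  have sum_sq_le := sum_integral_sq_prod_brierScore_posteriorProb_le Q l
  rw [prod_two_mul] at sum_simulated_le sum_target_eq sum_sq_le
  refine le_of_mul_le_mul_left ?_ (by positivity : 0 < N)
  calc N * (∏ j, (1 - l * bayesBrierRisk (Q j)) - ∏ j, (1 - l * bayesBrierRisk (P j)))
      ≤ ∑ θ, (∫ y, score θ y ∂(target θ) - ∫ y, score θ y ∂(simulated θ)) := by
        rw [Finset.sum_sub_distrib, sum_target_eq, mul_sub]
        exact sub_le_sub_left sum_simulated_le _
    _ ≤ √(Fintype.card (ι → Bool) * (t * ∑ θ, ∫ y, score θ y ^ 2 ∂(target θ))) :=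
        sum_integral_sub_integral_le_sqrt
          (fun θ => memLp_prod_brierScore _ hl measurable_post post_mem θ 2)
          (fun θ => integrable_prod_brierScore _ hl measurable_post post_mem θ)
          (fun θ y => (prod_mem_Icc fun j => brierScore_mem_Icc hl (θ j) (post_mem j y)).1) ht
    _ ≤ √(N * (t * (N * ∏ j, (1 + l ^ 2 - 2 * l * bayesBrierRisk (Q j))))) := by
        rw [Fintype.card_fun, Fintype.card_bool, Nat.cast_pow, Nat.cast_ofNat]
        gcongr
        exact (tvDist_nonneg _ _).trans (ht fun _ => true)
    _ = N * √(t * ∏ j, (1 + l ^ 2 - 2 * l * bayesBrierRisk (Q j))) := by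
        rw [show N * (t * (N * ∏ j, (1 + l ^ 2 - 2 * l * bayesBrierRisk (Q j)))) =
          N ^ 2 * (t * ∏ j, (1 + l ^ 2 - 2 * l * bayesBrierRisk (Q j))) by ring,
          Real.sqrt_mul (sq_nonneg N), Real.sqrt_sq (by positivity)]

end Hypercube

section ScoreGap

variable {ι : Type*} [Fintype ι]

lemma one_add_card_mul_mul_prod_le_prod {ε : ℝ} (hε : 0 ≤ ε) {x y : ι → ℝ} (hx : ∀ j, 0 ≤ x j)
    (hxy : ∀ j, (1 + ε) * x j ≤ y j) : (1 + Fintype.card ι * ε) * ∏ j, x j ≤ ∏ j, y j := by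
  calc (1 + Fintype.card ι * ε) * ∏ j, x j ≤ (1 + ε) ^ Fintype.card ι * ∏ j, x j := by
        gcongr
        · exact Finset.prod_nonneg fun j _ => hx j
        · exact one_add_mul_le_pow (by linarith) _
    _ = ∏ j, (1 + ε) * x j := by
        rw [Finset.prod_mul_distrib, Finset.prod_const, Finset.card_univ]
    _ ≤ ∏ j, y j :=
        Finset.prod_le_prod (fun j _ => mul_nonneg (by positivity) (hx j)) fun j _ => hxy j

variable {l : ℝ}

lemma prod_one_add_sq_sub_le_exp_mul_sq (hl : l ∈ Set.Icc (0 : ℝ) 1) {r : ι → ℝ}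
    (hr : ∀ j, r j ∈ Set.Icc (0 : ℝ) (1 / 4)) :
    ∏ j, (1 + l ^ 2 - 2 * l * r j) ≤
      Real.exp (2 * (Fintype.card ι * l ^ 2)) * (∏ j, (1 - l * r j)) ^ 2 := by
  have factor_le (j : ι) : 1 + l ^ 2 - 2 * l * r j ≤ Real.exp (2 * l ^ 2) * (1 - l * r j) ^ 2 := by
    have mul_le : l * r j ≤ 1 / 4 :=
      (mul_le_of_le_one_left (hr j).1 hl.2).trans (hr j).2
    have half_le : 1 / 2 ≤ (1 - l * r j) ^ 2 := by nlinarith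
    calc 1 + l ^ 2 - 2 * l * r j ≤ (1 - l * r j) ^ 2 + l ^ 2 := by
          nlinarith [sq_nonneg (l * r j)]
      _ ≤ (1 + 2 * l ^ 2) * (1 - l * r j) ^ 2 := by nlinarith [sq_nonneg l]
      _ ≤ Real.exp (2 * l ^ 2) * (1 - l * r j) ^ 2 := by
          gcongr
          linarith [Real.add_one_le_exp (2 * l ^ 2)]
  have factor_nonneg (j : ι) : 0 ≤ 1 + l ^ 2 - 2 * l * r j := by
    nlinarith [mul_le_mul_of_nonneg_left (hr j).2 hl.1, hl.2, sq_nonneg l]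
  calc ∏ j, (1 + l ^ 2 - 2 * l * r j) ≤ ∏ j, Real.exp (2 * l ^ 2) * (1 - l * r j) ^ 2 :=
        Finset.prod_le_prod (fun j _ => factor_nonneg j) fun j _ => factor_le j
    _ = Real.exp (2 * (Fintype.card ι * l ^ 2)) * (∏ j, (1 - l * r j)) ^ 2 := by
        rw [Finset.prod_mul_distrib, Finset.prod_const, Finset.card_univ, ← Real.exp_nat_mul,
          Finset.prod_pow, mul_left_comm]

lemma le_one_of_card_mul_sq_eq_one (hl : Fintype.card ι * l ^ 2 = 1) : l ≤ 1 := by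
  have card_pos : 0 < Fintype.card ι := Nat.pos_of_ne_zero fun h => by simp [h] at hl
  have one_le_card : (1 : ℝ) ≤ Fintype.card ι := by exact_mod_cast card_pos
  have sq_le_one : l ^ 2 ≤ 1 := hl ▸ le_mul_of_one_le_left (sq_nonneg l) one_le_card
  exact (abs_le.1 ((sq_le_one_iff_abs_le_one l).1 sq_le_one)).2

lemma sq_div_exp_two_le_of_prod_sub_prod_le (hl0 : 0 ≤ l) (hl : Fintype.card ι * l ^ 2 = 1)
    {κ t : ℝ} (hκ : 0 ≤ κ) {r r' : ι → ℝ} (hr : ∀ j, r j ∈ Set.Icc (0 : ℝ) (1 / 4))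
    (hr' : ∀ j, r' j ∈ Set.Icc (0 : ℝ) (1 / 4)) (gap : ∀ j, r' j + κ * l ≤ r j)
    (h : ∏ j, (1 - l * r' j) - ∏ j, (1 - l * r j) ≤
      √(t * ∏ j, (1 + l ^ 2 - 2 * l * r' j))) (ht : 0 ≤ t) :
    (κ / (1 + κ)) ^ 2 / Real.exp 2 ≤ t := by
  have hl1 : l ≤ 1 := le_one_of_card_mul_sq_eq_one hl
  have one_sub_mem {x : ℝ} (hx : x ∈ Set.Icc (0 : ℝ) (1 / 4)) : 0 < 1 - l * x := by
    linarith [(mul_le_of_le_one_left hx.1 hl1).trans hx.2]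
  set V := ∏ j, (1 - l * r j)
  set S := ∏ j, (1 - l * r' j)
  have S_pos : 0 < S := Finset.prod_pos fun j _ => one_sub_mem (hr' j)
  have ratio : (1 + κ) * V ≤ S := by
    have := one_add_card_mul_mul_prod_le_prod (ε := κ * l ^ 2) (by positivity)
      (fun j => (one_sub_mem (hr j)).le) (y := fun j => 1 - l * r' j) fun j => by
        nlinarith [mul_le_mul_of_nonneg_left (gap j) hl0,
          mul_nonneg (mul_nonneg hκ (sq_nonneg l)) (mul_nonneg hl0 (hr j).1)]
    rwa [mul_left_comm, hl, mul_one] at this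
  have mul_le : S * (κ / (1 + κ)) ≤ S * √(t * Real.exp 2) := by
    calc S * (κ / (1 + κ)) = S - S / (1 + κ) := by field_simp; ring
      _ ≤ S - V := by
          gcongr
          rwa [le_div_iff₀' (by positivity)]
      _ ≤ √(t * ∏ j, (1 + l ^ 2 - 2 * l * r' j)) := h
      _ ≤ √(t * (Real.exp 2 * S ^ 2)) := by
          gcongr
          simpa only [hl, mul_one] using prod_one_add_sq_sub_le_exp_mul_sq ⟨hl0, hl1⟩ hr'
      _ = S * √(t * Real.exp 2) := by
          rw [← mul_assoc, mul_comm, Real.sqrt_mul (sq_nonneg S), Real.sqrt_sq S_pos.le]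
  rw [div_le_iff₀ (Real.exp_pos 2)]
  exact (Real.le_sqrt (by positivity) (by positivity)).1 (le_of_mul_le_mul_left mul_le S_pos)

end ScoreGap

section SampleAmplification

variable {ι : Type*} {X : ι → Type*} [∀ j, MeasurableSpace (X j)] {α β : Type*}

lemma sq_div_exp_two_le_of_forall_tvDist_le [Fintype ι] {Y : ι → Type*} [∀ j, MeasurableSpace (Y j)]
    (P : ∀ j, Bool → Measure (X j)) [∀ j s, IsProbabilityMeasure (P j s)]
    (Q : ∀ j, Bool → Measure (Y j)) [∀ j s, IsProbabilityMeasure (Q j s)]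
    (K : Kernel (∀ j, X j) (∀ j, Y j)) [IsMarkovKernel K] {l κ t : ℝ} (hl0 : 0 ≤ l)
    (hl : Fintype.card ι * l ^ 2 = 1) (hκ : 0 ≤ κ)
    (gap : ∀ j, bayesBrierRisk (Q j) + κ * l ≤ bayesBrierRisk (P j))
    (ht : ∀ θ : ι → Bool, tvDist (Measure.pi fun j => Q j (θ j))
      ((Measure.pi fun j => P j (θ j)).bind K) ≤ t) :
    (κ / (1 + κ)) ^ 2 / Real.exp 2 ≤ t :=
  sq_div_exp_two_le_of_prod_sub_prod_le hl0 hl hκ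
    (fun j => ⟨bayesBrierRisk_nonneg (P j), bayesBrierRisk_le_one_div_four (P j)⟩)
    (fun j => ⟨bayesBrierRisk_nonneg (Q j), bayesBrierRisk_le_one_div_four (Q j)⟩) gap
    (prod_one_sub_bayesBrierRisk_sub_le P Q K ⟨hl0, le_one_of_card_mul_sq_eq_one hl⟩ ht)
    ((tvDist_nonneg _ _).trans (ht fun _ => true))

/-- The kernel acting on coordinatewise families of samples that corresponds to the kernel `T`
acting on samples of the product model. -/
noncomputable def swapKernel (T : Kernel (α → ∀ j, X j) (β → ∀ j, X j)) :
    Kernel (∀ j, α → X j) (∀ j, β → X j) :=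
  (T.comap (fun x i j => x j i) (by fun_prop)).map fun x j i => x i j

instance isMarkovKernel_swapKernel (T : Kernel (α → ∀ j, X j) (β → ∀ j, X j))
    [IsMarkovKernel T] : IsMarkovKernel (swapKernel T) :=
  Kernel.IsMarkovKernel.map _ measurable_pi_swap

variable [Fintype ι] [Fintype α] (T : Kernel (α → ∀ j, X j) (β → ∀ j, X j))
  (μ : ∀ j, Measure (X j)) [∀ j, IsFiniteMeasure (μ j)]

lemma pi_bind_swapKernel :
    (Measure.pi fun j => Measure.pi fun _ : α => μ j).bind (swapKernel T) =
      ((Measure.pi fun _ : α => Measure.pi μ).bind T).map fun x j i => x i j := by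
  rw [← pi_map_swap, swapKernel, ← Measure.map_comp _ _ measurable_pi_swap]
  congr 1
  rw [← Measure.deterministic_comp_eq_map measurable_pi_swap, Measure.comp_assoc,
    Kernel.comp_deterministic_eq_comap]
  rfl

lemma tvDist_pi_bind_swapKernel_le [Fintype β] [IsMarkovKernel T] :
    tvDist (Measure.pi fun j => Measure.pi fun _ : β => μ j)
        ((Measure.pi fun j => Measure.pi fun _ : α => μ j).bind (swapKernel T)) ≤
      tvDist (Measure.pi fun _ : β => Measure.pi μ)
        ((Measure.pi fun _ : α => Measure.pi μ).bind T) := by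
  rw [pi_bind_swapKernel, ← pi_map_swap]
  exact tvDist_map_le _ _ measurable_pi_swap

lemma le_ampErr {Z Θ : Type*} [MeasurableSpace Z] [Nonempty Θ] (P : Θ → Measure Z)
    [∀ θ, IsProbabilityMeasure (P θ)] {n m : ℕ} {ε : ℝ}
    (h : ∀ T : Kernel (Fin n → Z) (Fin (n + m) → Z), IsMarkovKernel T → ∀ t,
      (∀ θ, tvDist (Measure.pi fun _ : Fin (n + m) => P θ)
        ((Measure.pi fun _ : Fin n => P θ).bind T) ≤ t) → ε ≤ t) :
    ε ≤ ampErr P n m := by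
  have : Nonempty {T : Kernel (Fin n → Z) (Fin (n + m) → Z) // IsMarkovKernel T} :=
    ⟨⟨Kernel.const _ (Measure.pi fun _ => P (Classical.arbitrary Θ)), inferInstance⟩⟩
  refine le_ciInf fun ⟨T, hT⟩ => h T hT _ fun θ => le_ciSup (f := fun θ =>
    tvDist (Measure.pi fun _ : Fin (n + m) => P θ) ((Measure.pi fun _ : Fin n => P θ).bind T))
    ⟨1, ?_⟩ θ
  rintro _ ⟨θ, rfl⟩
  exact tvDist_le_one _ _

end SampleAmplification

/-- Universal lower bound for product models.
For every `c > 0` there exists `c' > 0` depending only on `c` such that for all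
`n, d ≥ 1` and every product model: if each coordinate `j` contains two parameters
with `1/(10n) ≤ H²(p_{θ_{j,+}}, p_{θ_{j,−}}) ≤ 1/(5n)`, then
`ε*(𝒫, n, ⌈cn/√d⌉) ≥ c'`. -/
theorem product_model_universal_lower_bound (c : ℝ) (hc : 0 < c) :
    ∃ c' : ℝ, 0 < c' ∧
      ∀ (n d : ℕ), 1 ≤ n → 1 ≤ d →
      ∀ (X : Fin d → Type*) [∀ j, MeasurableSpace (X j)]
        (Θ : Fin d → Type*) (p : ∀ j, Θ j → Measure (X j)),
        (∀ j t, IsProbabilityMeasure (p j t)) →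
        (∀ j, ∃ θp θm : Θ j,
          1 / (10 * n) ≤ hellingerSq (p j θp) (p j θm) ∧
          hellingerSq (p j θp) (p j θm) ≤ 1 / (5 * n)) →
        c' ≤ ampErr (fun θ : (∀ j, Θ j) => Measure.pi fun j => p j (θ j)) n
              ⌈c * n / Real.sqrt d⌉₊ := by
  set κ : ℝ := 32 / 625 * (c / (10 + c))
  have κ_pos : 0 < κ := by positivity
  refine ⟨(κ / (1 + κ)) ^ 2 / Real.exp 2, by positivity, ?_⟩
  intro n d hn hd X _ Θ p hp separated
  choose θp θm h_lower h_upper using separated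
  have one_le_sqrt : 1 ≤ √(d : ℝ) := Real.one_le_sqrt.2 (by exact_mod_cast hd)
  have : Nonempty (∀ j, Θ j) := ⟨θp⟩
  let q (j : Fin d) (s : Bool) : Measure (X j) := p j (if s then θp j else θm j)
  have : ∀ j s, IsProbabilityMeasure (q j s) := fun j s => hp j _
  refine le_ampErr _ fun T _ t ht => ?_
  refine sq_div_exp_two_le_of_forall_tvDist_le (fun j s => Measure.pi fun _ : Fin n => q j s)
    (fun j s => Measure.pi fun _ => q j s) (swapKernel T) (l := 1 / √d) (by positivity)
    ?_ κ_pos.le (fun j => ?_) fun θ => ?_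
  · rw [Fintype.card_fin, one_div, inv_pow, Real.sq_sqrt (by positivity), mul_inv_cancel₀]
    positivity
  · rw [mul_one_div]
    exact bayesBrierRisk_pi_add_ceil_le hc one_le_sqrt hn (q j) (h_lower j) (h_upper j)
  · exact (tvDist_pi_bind_swapKernel_le T fun j => q j (θ j)).trans
      (ht fun j => if θ j then θp j else θm j)
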